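/- There is an absolute constant K such that the following holds in the SimLine setting. Assume u > log₂ q + log₂ v, let h := s/(u − log₂ q − log₂ v) + 1 (a real number), and assume h ≤ v. For every deterministic MPC algorithm with m machines, local memory s bits, and at most q oracle queries per machine per round, and every integer R with 1 ≤ R ≤ w/h − 1, the probability over uniformly random (RO, X) that some machine queries the final SimLine string s_w during the first R rounds (i.e., s_w ∈ Q^{(≤R−1)}) is at most K·R·(m·2^(−(u − log₂ q − log₂ v)) + w·m·q·2^(−u) + w²·2^(−u)). In particular, this is the content of Lemma A.1: for the parameter setting w = T, u = n/3, v = S/u, s ≤ S/c (c a sufficiently large universal constant), with n ≤ S ≤ T ≤ 2^(n^{1/4}), m ≤ 2^(n^{1/4}) and q ≤ 2^(n/4), any deterministic MPC algorithm that computes SimLine^RO_{n,w,u,v} with probability at least 1/3 over uniform (RO, X) must run for at least w/h = Ω(T/s) rounds. -/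

import Mathlib

/-- Probability of `P` under the uniform distribution on a finite type `Ω`. -/
noncomputable def unifProb {Ω : Type} [Fintype Ω] (P : Ω → Prop) : ℝ :=
  (Set.ncard {ω : Ω | P ω} : ℝ) / (Fintype.card Ω : ℝ)
/-- Bit strings of length `k`. -/
abbrev Bits (k : ℕ) := Fin k → Bool

/-- The `j`-th bit (`0`-based) of a bit string, `false` out of range. -/
def bitAt {k : ℕ} (y : Bits k) (j : ℕ) : Bool := if h : j < k then y ⟨j, h⟩ else false

/-- The `i`-th block (`0`-based) of the input `X = (x_1, …, x_v)`. -/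
def getX {u v : ℕ} (X : Fin v → Bits u) (i : ℕ) : Bits u :=
  if h : i < v then X ⟨i, h⟩ else fun _ => false
/-- The SimLine query string built from the step counter `k` (`0`-based, so paper index
`k+1`) and the current chain value `r`: the concatenation of `x_{(k mod v)+1}` (1-based),
`r`, and `n − 2u` zeros. -/
def simStr (n u v : ℕ) (X : Fin v → Bits u) (k : ℕ) (r : Bits u) : Bits n := fun j =>
  if (j : ℕ) < u then bitAt (getX X (k % v)) (j : ℕ)
  else if (j : ℕ) < 2 * u then bitAt r ((j : ℕ) - u)
  else false

/-- `simR n u v RO X k` is the paper's `r_{k+1}`:  `r_1 = 0^u` and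
`r_{i+1} = ` the first `u` bits of `RO(s_i)`. -/
def simR (n u v : ℕ) (RO : Bits n → Bits n) (X : Fin v → Bits u) : ℕ → Bits u
  | 0 => fun _ => false
  | k + 1 => fun j => bitAt (RO (simStr n u v X k (simR n u v RO X k))) (j : ℕ)

/-- `simS n u v RO X k` is the paper's `s_{k+1}`. -/
def simS (n u v : ℕ) (RO : Bits n → Bits n) (X : Fin v → Bits u) (k : ℕ) : Bits n :=
  simStr n u v X k (simR n u v RO X k)
/-- Answers to the first `t` queries of a deterministic adaptive oracle algorithm whose
next-query function is `f`. -/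
def advAns (n : ℕ) (RO : Bits n → Bits n) (f : List (Bits n) → Bits n) : ℕ → List (Bits n)
  | 0 => []
  | t + 1 => advAns n RO f t ++ [RO (f (advAns n RO f t))]

/-- The `(t+1)`-st query (so the paper's `q_{t+1}`) of the adaptive algorithm `f`. -/
def advQ (n : ℕ) (RO : Bits n → Bits n) (f : List (Bits n) → Bits n) (t : ℕ) : Bits n :=
  f (advAns n RO f t)
/-- A deterministic MPC algorithm with `m` machines, local memory `s` bits, at most `q`
adaptive oracle queries (to an oracle on `n`-bit strings) per machine per round, on
inputs from `I`.  `init` splits the input into the machines' initial states, `qf k i` is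
machine `i`'s next-query function in round `k` (from its state and the answers received
so far in the round), and `cf k i` produces the messages machine `i` sends to each
machine at the end of round `k`; each machine receives at most `s` bits per round. -/
structure MPC (n s q m : ℕ) (I : Type) where
  init : I → Fin m → Bits s
  qf : ℕ → Fin m → Bits s → List (Bits n) → Bits n
  cf : ℕ → Fin m → Bits s → List (Bits n) → Fin m → List Bool
  comm_le : ∀ (k : ℕ) (st : Fin m → Bits s) (ans : Fin m → List (Bits n)) (j : Fin m),
    (∑ i : Fin m, (cf k i (st i) (ans i) j).length) ≤ s

/-- Pad/truncate a list of booleans to an `s`-bit state. -/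
def listToBits (s : ℕ) (L : List Bool) : Bits s := fun b => L.getD (b : ℕ) false

/-- `mstate A RO X k i` : the state of machine `i` at the beginning of round `k` when the
MPC algorithm `A` is run with oracle `RO` on input `X`. -/
def mstate {n s q m : ℕ} {I : Type} (A : MPC n s q m I) (RO : Bits n → Bits n) (X : I) :
    ℕ → Fin m → Bits s
  | 0 => A.init X
  | k + 1 => fun j =>
      listToBits s ((List.ofFn (fun i : Fin m =>
        A.cf k i (mstate A RO X k i)
          (advAns n RO (A.qf k i (mstate A RO X k i)) q) j)).flatten)

/-- The `(t+1)`-st oracle query of machine `i` in round `k` of the run of `A` with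
oracle `RO` on input `X`. -/
def mquery {n s q m : ℕ} {I : Type} (A : MPC n s q m I) (RO : Bits n → Bits n) (X : I)
    (k : ℕ) (i : Fin m) (t : ℕ) : Bits n :=
  advQ n RO (A.qf k i (mstate A RO X k i)) t

open scoped BigOperators Finset

/-!
Let `2^(-d) = v q / 2^u` and `c = ⌈s / d⌉`. Three kinds of coincidence are unlikely.

* The chain repeats a string: as long as `s_j` is new, the oracle answer that determines `r_{j+1}`
  is still uniform, so `r_{j+1}` hits one of `r_1, …, r_j` with probability at most `j / 2^u`.
* A machine queries `s_{j+1}` although no query that could have influenced it was `s_j`: again the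
  answer at `s_j` is still uniform, so the guess succeeds with probability at most `1 / 2^u`.
* A machine reads more than `c` distinct input blocks in one round: given the oracle, its at most
  `q` queries are determined by one of `2^s` states, and those of a fixed state contain `c + 1` of
  the `v` uniform blocks with probability at most `2^(-d (c + 1))`. In total this is at most
  `2^(s - d (c + 1)) ≤ 2^(-d)`.

Otherwise the chain is walked in order, and since at most `v` consecutive chain strings start with
different input blocks, no machine pushes it further than `c` steps per round, which is too slow to
arrive at `s_w` in `R` rounds.
-/

/-! ### Uniform probability -/

section UnifProb

variable {Ω Ω₁ Ω₂ ι α β σ : Type} [Fintype Ω] [Fintype Ω₁] [Fintype Ω₂] [Fintype ι] [Fintype α]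
  [Fintype β] [Fintype σ]

theorem unifProb_eq_card_filter_div (P : Ω → Prop) [DecidablePred P] :
    unifProb P = #{ω | P ω} / Fintype.card Ω := by
  rw [unifProb, ← Set.ncard_coe_finset, Finset.coe_filter_univ]

theorem unifProb_eq_expect (P : Ω → Prop) [DecidablePred P] :
    unifProb P = 𝔼 ω, if P ω then (1 : ℝ) else 0 := by
  rw [unifProb_eq_card_filter_div, Fintype.expect_eq_sum_div_card, Finset.sum_boole]

theorem unifProb_le_of_injOn {P Q : Ω → Prop} (f : Ω → Ω) (hf : ∀ ω, P ω → Q (f ω))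
    (hinj : Set.InjOn f {ω | P ω}) : unifProb P ≤ unifProb Q := by
  have hcard : {ω | P ω}.ncard ≤ {ω | Q ω}.ncard := Set.ncard_le_ncard_of_injOn f hf hinj
  exact div_le_div_of_nonneg_right (Nat.cast_le.2 hcard) (Nat.cast_nonneg _)

theorem unifProb_mono {P Q : Ω → Prop} (h : ∀ ω, P ω → Q ω) : unifProb P ≤ unifProb Q :=
  unifProb_le_of_injOn id h Function.injective_id.injOn

theorem unifProb_or_le (P Q : Ω → Prop) :
    unifProb (fun ω => P ω ∨ Q ω) ≤ unifProb P + unifProb Q := by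
  unfold unifProb
  rw [← add_div]
  gcongr
  exact_mod_cast Set.ncard_union_le {ω | P ω} {ω | Q ω}

theorem unifProb_exists_le (P : ι → Ω → Prop) {ε : ℝ} (h : ∀ i, unifProb (P i) ≤ ε) :
    unifProb (fun ω => ∃ i, P i ω) ≤ Fintype.card ι * ε :=
  calc unifProb (fun ω => ∃ i, P i ω) ≤ ∑ i, unifProb (P i) := by
        unfold unifProb
        rw [← Finset.sum_div, Set.ofPred_exists]
        gcongr
        exact_mod_cast Set.ncard_iUnion_le_of_fintype fun i => {ω | P i ω}
    _ ≤ ∑ _i : ι, ε := Finset.sum_le_sum fun i _ => h i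
    _ = Fintype.card ι * ε := by simp

theorem unifProb_prod (P : Ω₁ × Ω₂ → Prop) :
    unifProb P = 𝔼 x, unifProb fun y => P (x, y) := by
  classical
  simp only [unifProb_eq_expect]
  rw [← Finset.univ_product_univ, Finset.expect_product]

theorem unifProb_prod_right (P : Ω₁ × Ω₂ → Prop) :
    unifProb P = 𝔼 y, unifProb fun x => P (x, y) := by
  classical
  rw [unifProb_prod]
  simp only [unifProb_eq_expect]
  exact Finset.expect_comm _ _ _

theorem unifProb_prod_le [Nonempty Ω₁] {P : Ω₁ × Ω₂ → Prop} {ε : ℝ}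
    (h : ∀ x, unifProb (fun y => P (x, y)) ≤ ε) : unifProb P ≤ ε :=
  (unifProb_prod P).trans_le <| Finset.expect_le Finset.univ_nonempty fun x _ => h x

theorem unifProb_prod_right_le [Nonempty Ω₂] {P : Ω₁ × Ω₂ → Prop} {ε : ℝ}
    (h : ∀ y, unifProb (fun x => P (x, y)) ≤ ε) : unifProb P ≤ ε :=
  (unifProb_prod_right P).trans_le <| Finset.expect_le Finset.univ_nonempty fun y _ => h y

theorem unifProb_fst [Nonempty Ω₂] (P : Ω₁ → Prop) :
    unifProb (fun x : Ω₁ × Ω₂ => P x.1) = unifProb P := by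
  exact (unifProb_prod_right _).trans (Fintype.expect_const (unifProb P))

theorem unifProb_forall_mem [DecidableEq ι] [Nonempty β] (T : Finset ι) (S : ι → Finset β) :
    unifProb (fun X : ι → β => ∀ b ∈ T, X b ∈ S b) = ∏ b ∈ T, (#(S b) / Fintype.card β : ℝ) := by
  classical
  have hpi : ({X | ∀ b ∈ T, X b ∈ S b} : Finset (ι → β)) =
      Fintype.piFinset fun b => if b ∈ T then S b else Finset.univ := by
    ext X
    simp only [Finset.mem_filter_univ, Fintype.mem_piFinset]
    refine forall_congr' fun b => ?_
    split_ifs with hb <;> simp [hb]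
  rw [unifProb_eq_card_filter_div, hpi, Fintype.card_piFinset, Fintype.card_pi, Nat.cast_prod,
    Nat.cast_prod, ← Finset.prod_div_distrib]
  have hfactor (b : ι) : (#(if b ∈ T then S b else Finset.univ) / Fintype.card β : ℝ) =
      if b ∈ T then (#(S b) / Fintype.card β : ℝ) else 1 := by
    split_ifs
    · rfl
    · rw [Finset.card_univ, div_self (Nat.cast_ne_zero.2 Fintype.card_ne_zero)]
  simp only [hfactor, Finset.prod_ite_mem, Finset.univ_inter]

theorem unifProb_le_card_filter_mem_le [DecidableEq ι] [DecidableEq β] [Nonempty β]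
    (F : Finset β) (a : ℕ) :
    unifProb (fun X : ι → β => a ≤ #{b | X b ∈ F}) ≤
      (Fintype.card ι * #F / Fintype.card β : ℝ) ^ a := by
  have hsub : unifProb (fun X : ι → β => a ≤ #{b | X b ∈ F}) ≤
      unifProb fun X : ι → β =>
        ∃ T : Finset.powersetCard a (Finset.univ : Finset ι), ∀ b ∈ T.1, X b ∈ F := by
    refine unifProb_mono fun X hX => ?_
    obtain ⟨T, hT, hcard⟩ := Finset.exists_subset_card_eq hX
    exact ⟨⟨T, Finset.mem_powersetCard_univ.2 hcard⟩, fun b hb => by simpa using hT hb⟩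
  have hT (T : Finset.powersetCard a (Finset.univ : Finset ι)) :
      unifProb (fun X : ι → β => ∀ b ∈ T.1, X b ∈ F) ≤ (#F / Fintype.card β : ℝ) ^ a := by
    rw [unifProb_forall_mem, Finset.prod_const, Finset.mem_powersetCard_univ.1 T.2]
  calc unifProb (fun X : ι → β => a ≤ #{b | X b ∈ F})
      ≤ ((Fintype.card ι).choose a : ℝ) * (#F / Fintype.card β : ℝ) ^ a := by
        simpa using hsub.trans (unifProb_exists_le _ hT)
    _ ≤ (Fintype.card ι : ℝ) ^ a * (#F / Fintype.card β : ℝ) ^ a := by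
        gcongr
        exact_mod_cast Nat.choose_le_pow _ _
    _ = (Fintype.card ι * #F / Fintype.card β : ℝ) ^ a := by rw [← mul_pow, mul_div_assoc]

theorem unifProb_exists_le_card_filter_mem_le [DecidableEq ι] [DecidableEq β] [Nonempty β]
    (F : σ → Finset β) {q : ℕ} (hF : ∀ x, #(F x) ≤ q) (a : ℕ) :
    unifProb (fun X : ι → β => ∃ x, a ≤ #{b | X b ∈ F x}) ≤
      Fintype.card σ * (Fintype.card ι * q / Fintype.card β : ℝ) ^ a := by
  refine unifProb_exists_le _ fun x => (unifProb_le_card_filter_mem_le (F x) a).trans ?_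
  gcongr
  exact hF x

theorem unifProb_apply_mem_le [DecidableEq α] [Nonempty β] {G : (α → β) → Prop}
    {p : (α → β) → α} {B : (α → β) → Set β} {ε : ℝ}
    (hp : ∀ f b, G f → p (Function.update f (p f) b) = p f)
    (hB : ∀ f b, G f → B (Function.update f (p f) b) = B f)
    (hε : ∀ f, unifProb (fun b => b ∈ B f) ≤ ε) :
    unifProb (fun f => G f ∧ f (p f) ∈ B f) ≤ ε := by
  -- Exchanging `f (p f)` with an independent sample `b` preserves the uniform distribution.
  let swap (x : (α → β) × β) : (α → β) × β := (Function.update x.1 (p x.1) x.2, x.1 (p x.1))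
  have hswap (x : (α → β) × β) (hx : G x.1) : swap (swap x) = x := by
    simp [swap, hp x.1 x.2 hx]
  calc unifProb (fun f => G f ∧ f (p f) ∈ B f)
      = unifProb fun x : (α → β) × β => G x.1 ∧ x.1 (p x.1) ∈ B x.1 := (unifProb_fst _).symm
    _ ≤ unifProb fun x : (α → β) × β => x.2 ∈ B x.1 :=
        unifProb_le_of_injOn swap (fun x hx => (hB x.1 x.2 hx.1).symm ▸ hx.2)
          (Set.LeftInvOn.injOn fun x hx => hswap x hx.1)
    _ ≤ ε := unifProb_prod_le hε

end UnifProb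

/-! ### The chain -/

section Chain

variable {n u v : ℕ}

/-- The block of a query string that carries the input block `x_i`. -/
def firstBlock (u : ℕ) (y : Bits n) : Bits u := fun j => bitAt y j

/-- The block of a query string that carries the chain value `r_i`. -/
def secondBlock (u : ℕ) (y : Bits n) : Bits u := fun j => bitAt y (u + j)

/-- The chain string with `0`-based index `j` (the paper's `s_{j+1}`) differs from all earlier
ones, so that the oracle answer to it has not been used yet by the chain. -/
def SimFresh (RO : Bits n → Bits n) (X : Fin v → Bits u) (j : ℕ) : Prop :=
  ∀ l < j, simS n u v RO X l ≠ simS n u v RO X j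

theorem firstBlock_simS (hn : 2 * u ≤ n) (RO : Bits n → Bits n) (X : Fin v → Bits u) (j : ℕ) :
    firstBlock u (simS n u v RO X j) = getX X (j % v) := by
  ext i
  simp [firstBlock, simS, simStr, bitAt, show (i : ℕ) < n by lia]

theorem secondBlock_simS (hn : 2 * u ≤ n) (RO : Bits n → Bits n) (X : Fin v → Bits u) (j : ℕ) :
    secondBlock u (simS n u v RO X j) = simR n u v RO X j := by
  ext i
  simp [secondBlock, simS, simStr, bitAt, show u + (i : ℕ) < n by lia,
    show u + (i : ℕ) < 2 * u by lia]

theorem simR_succ (RO : Bits n → Bits n) (X : Fin v → Bits u) (j : ℕ) :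
    simR n u v RO X (j + 1) = firstBlock u (RO (simS n u v RO X j)) := rfl

theorem unifProb_firstBlock_eq (hu : u ≤ n) (z : Bits u) :
    unifProb (fun y : Bits n => firstBlock u y = z) = ((2 : ℝ) ^ u)⁻¹ := by
  have hbits (y : Bits n) : firstBlock u y = z ↔
      ∀ j ∈ Finset.univ.map (Fin.castLEEmb hu), y j ∈ ({bitAt z j} : Finset Bool) := by
    simp only [firstBlock, funext_iff, Finset.forall_mem_map, Finset.mem_univ, true_imp_iff,
      Finset.mem_singleton]
    refine forall_congr' fun j => ?_
    simp [bitAt, j.2.trans_le hu, Fin.castLE]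
  simp only [hbits]
  rw [unifProb_forall_mem]
  simp

theorem simR_congr {RO RO' : Bits n → Bits n} {X : Fin v → Bits u} {j : ℕ}
    (h : ∀ l < j, RO' (simS n u v RO X l) = RO (simS n u v RO X l)) :
    simR n u v RO' X j = simR n u v RO X j := by
  induction j with
  | zero => rfl
  | succ j ih =>
    have hj : simR n u v RO' X j = simR n u v RO X j := ih fun l hl => h l (hl.trans j.lt_succ_self)
    rw [simR_succ, simR_succ, simS, hj, ← simS, h j j.lt_succ_self]

theorem simFresh_of_forall_succ {RO : Bits n → Bits n} {X : Fin v → Bits u} {L j : ℕ}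
    (h : ∀ j < L, SimFresh RO X j → SimFresh RO X (j + 1)) (hj : j ≤ L) : SimFresh RO X j := by
  induction j with
  | zero => exact fun l hl => absurd hl l.not_lt_zero
  | succ j ih => exact h j hj (ih (Nat.le_of_succ_le hj))

theorem SimFresh.simR_update {RO : Bits n → Bits n} {X : Fin v → Bits u} {j l : ℕ}
    (hj : SimFresh RO X j) (hl : l ≤ j) (b : Bits n) :
    simR n u v (Function.update RO (simS n u v RO X j) b) X l = simR n u v RO X l :=
  simR_congr fun _ hi => Function.update_of_ne (hj _ (hi.trans_le hl)) _ _

theorem unifProb_simR_succ_eq_le (hu : u ≤ n) (X : Fin v → Bits u) (j : ℕ)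
    {G : (Bits n → Bits n) → Prop} {z : (Bits n → Bits n) → Bits u}
    (hfresh : ∀ RO, G RO → SimFresh RO X j)
    (hz : ∀ RO b, G RO → z (Function.update RO (simS n u v RO X j) b) = z RO) :
    unifProb (fun RO => G RO ∧ simR n u v RO X (j + 1) = z RO) ≤ ((2 : ℝ) ^ u)⁻¹ := by
  refine unifProb_apply_mem_le (p := fun RO => simS n u v RO X j)
    (B := fun RO => {y | firstBlock u y = z RO}) (fun RO b hG => ?_) (fun RO b hG => ?_)
    fun RO => (unifProb_firstBlock_eq hu (z RO)).le
  · rw [simS, (hfresh RO hG).simR_update le_rfl b, ← simS]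
  · simp only [hz RO b hG]

theorem unifProb_simFresh_and_not_simFresh_succ_le (hn : 2 * u ≤ n) (j : ℕ) :
    unifProb (fun ω : (Bits n → Bits n) × (Fin v → Bits u) =>
      SimFresh ω.1 ω.2 j ∧ ¬ SimFresh ω.1 ω.2 (j + 1)) ≤ (j + 1) * ((2 : ℝ) ^ u)⁻¹ := by
  refine unifProb_prod_right_le fun X => ?_
  have hcollide (l : Fin (j + 1)) : unifProb (fun RO : Bits n → Bits n =>
      SimFresh RO X j ∧ simR n u v RO X (j + 1) = simR n u v RO X l) ≤ ((2 : ℝ) ^ u)⁻¹ :=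
    unifProb_simR_succ_eq_le (by lia) X j (fun _ h => h)
      fun _ b h => h.simR_update (Nat.lt_succ_iff.1 l.2) b
  refine (unifProb_mono fun RO hRO => ?_).trans
    ((unifProb_exists_le _ hcollide).trans_eq (by simp))
  obtain ⟨l, hl, hls⟩ : ∃ l < j + 1, simS n u v RO X l = simS n u v RO X (j + 1) := by
    simpa [SimFresh] using hRO.2
  refine ⟨⟨l, hl⟩, hRO.1, ?_⟩
  rw [← secondBlock_simS hn, ← secondBlock_simS hn, hls]

end Chain

/-! ### Queries of an MPC algorithm -/

theorem advAns_congr {n : ℕ} {RO RO' : Bits n → Bits n} {f : List (Bits n) → Bits n} {t : ℕ}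
    (h : ∀ t' < t, RO' (advQ n RO f t') = RO (advQ n RO f t')) :
    advAns n RO' f t = advAns n RO f t := by
  induction t with
  | zero => rfl
  | succ t ih =>
    have ht : advAns n RO' f t = advAns n RO f t := ih fun t' ht' => h t' (ht'.trans t.lt_succ_self)
    have hans : RO' (f (advAns n RO f t)) = RO (f (advAns n RO f t)) := h t t.lt_succ_self
    rw [advAns, advAns, ht, hans]

namespace MPC

section Congr

variable {n s q m : ℕ} {I : Type} (A : MPC n s q m I) {RO RO' : Bits n → Bits n} {X : I}
  {k t : ℕ} {i : Fin m} {y : Bits n}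

/-- The string `y` is among the queries that can influence the query with `0`-based index `t` of
machine `i` in round `k`: those of all machines in earlier rounds and the preceding ones of
machine `i` in the same round. -/
def QueriedBefore (RO : Bits n → Bits n) (X : I) (k : ℕ) (i : Fin m) (t : ℕ) (y : Bits n) : Prop :=
  (∃ k' < k, ∃ i', ∃ t' < q, mquery A RO X k' i' t' = y) ∨ ∃ t' < t, mquery A RO X k i t' = y

theorem mstate_congr
    (h : ∀ k' < k, ∀ i, ∀ t < q, RO' (mquery A RO X k' i t) = RO (mquery A RO X k' i t)) :
    mstate A RO' X k = mstate A RO X k := by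
  induction k with
  | zero => rfl
  | succ k ih =>
    have hstate : mstate A RO' X k = mstate A RO X k :=
      ih fun k' hk' => h k' (hk'.trans k.lt_succ_self)
    have hans (i : Fin m) : advAns n RO' (A.qf k i (mstate A RO X k i)) q =
        advAns n RO (A.qf k i (mstate A RO X k i)) q :=
      advAns_congr (h k k.lt_succ_self i)
    simp only [mstate, hstate, hans]

theorem mquery_congr (h : ∀ y, A.QueriedBefore RO X k i t y → RO' y = RO y) :
    mquery A RO' X k i t = mquery A RO X k i t := by
  have hstate : mstate A RO' X k = mstate A RO X k :=
    A.mstate_congr fun k' hk' i' t' ht' => h _ (.inl ⟨k', hk', i', t', ht', rfl⟩)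
  have hans : advAns n RO' (A.qf k i (mstate A RO X k i)) t =
      advAns n RO (A.qf k i (mstate A RO X k i)) t :=
    advAns_congr fun t' ht' => h _ (.inr ⟨t', ht', rfl⟩)
  rw [mquery, mquery, advQ, advQ, hstate, hans]

theorem mquery_update (h : ¬ A.QueriedBefore RO X k i t y) (b : Bits n) :
    mquery A (Function.update RO y b) X k i t = mquery A RO X k i t :=
  A.mquery_congr fun z hz => by
    have hzy : z ≠ y := fun hzy => h (hzy ▸ hz)
    exact Function.update_of_ne hzy b RO

end Congr

section SimLine

variable {n u v s q m : ℕ}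

/-- The query with `0`-based index `t` of machine `i` in round `k` is the chain string with
`0`-based index `j + 1`, although the string with index `j`, whose oracle answer determines it, has
neither been queried by anyone this query depends on nor occurred earlier in the chain. -/
def LuckyGuess (A : MPC n s q m (Fin v → Bits u)) (RO : Bits n → Bits n) (X : Fin v → Bits u)
    (k : ℕ) (i : Fin m) (t j : ℕ) : Prop :=
  (SimFresh RO X j ∧ ¬ A.QueriedBefore RO X k i t (simS n u v RO X j)) ∧
    mquery A RO X k i t = simS n u v RO X (j + 1)

/-- The indices of the input blocks that occur as the first block of a query which machine `i`
makes in round `k`. -/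
def blocksRead (A : MPC n s q m (Fin v → Bits u)) (RO : Bits n → Bits n) (X : Fin v → Bits u)
    (k : ℕ) (i : Fin m) : Finset (Fin v) :=
  {b | ∃ t < q, firstBlock u (mquery A RO X k i t) = X b}

variable {A : MPC n s q m (Fin v → Bits u)} {RO : Bits n → Bits n} {X : Fin v → Bits u}
  {k c : ℕ} {i : Fin m}

theorem mem_blocksRead {b : Fin v} :
    b ∈ A.blocksRead RO X k i ↔ ∃ t < q, firstBlock u (mquery A RO X k i t) = X b :=
  Finset.mem_filter_univ b

theorem lt_card_blocksRead (hn : 2 * u ≤ n) (hcv : c < v) {j₀ : ℕ}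
    (h : ∀ j, j₀ ≤ j → j ≤ j₀ + c → ∃ t < q, mquery A RO X k i t = simS n u v RO X j) :
    c < #(A.blocksRead RO X k i) := by
  have hv : 0 < v := c.zero_le.trans_lt hcv
  let block (b : ℕ) : Fin v := ⟨(j₀ + b) % v, Nat.mod_lt _ hv⟩
  have hinj : Set.InjOn block (Finset.range (c + 1)) := by
    intro b hb b' hb' hbb'
    have hmod : b ≡ b' [MOD v] := Nat.ModEq.add_left_cancel' j₀ (Fin.mk.inj_iff.1 hbb')
    simp only [Finset.coe_range, Set.mem_Iio] at hb hb'
    exact hmod.eq_of_lt_of_lt (by lia) (by lia)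
  have hread (b : ℕ) (hb : b ∈ Finset.range (c + 1)) : block b ∈ A.blocksRead RO X k i := by
    obtain ⟨t, ht, hts⟩ := h (j₀ + b) (by lia) (by grind)
    exact mem_blocksRead.2 ⟨t, ht, by rw [hts, firstBlock_simS hn, getX, dif_pos (Nat.mod_lt _ hv)]⟩
  simpa using Finset.card_le_card_of_injOn block hread hinj

theorem exists_mquery_eq_simS_of_le {L j₀ j l t : ℕ}
    (hstep : ∀ t < q, ∀ j < L, mquery A RO X k i t = simS n u v RO X (j + 1) →
      A.QueriedBefore RO X k i t (simS n u v RO X j))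
    (hprev : ∀ k' < k, ∀ i', ∀ t < q, ∀ j ≤ L, mquery A RO X k' i' t = simS n u v RO X j → j < j₀)
    (hj : j ≤ L) (ht : t < q) (hq : mquery A RO X k i t = simS n u v RO X j)
    (hl : j₀ ≤ l) (hlj : l ≤ j) :
    ∃ t < q, mquery A RO X k i t = simS n u v RO X l := by
  induction hlj using Nat.decreasingInduction with
  | self => exact ⟨t, ht, hq⟩
  | of_succ l hlj ih =>
    obtain ⟨t₁, ht₁, hq₁⟩ := ih (hl.trans l.le_succ)
    obtain ⟨k', hk', i', t', ht', hq'⟩ | ⟨t', ht', hq'⟩ := hstep t₁ ht₁ l (hlj.trans_le hj) hq₁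
    · exact absurd (hprev k' hk' i' t' ht' l (hlj.le.trans hj) hq') hl.not_gt
    · exact ⟨t', ht'.trans ht₁, hq'⟩

theorem lt_of_mquery_eq_simS {R L j t : ℕ} (hn : 2 * u ≤ n) (hcv : c < v)
    (hstep : ∀ k < R, ∀ i, ∀ t < q, ∀ j < L, mquery A RO X k i t = simS n u v RO X (j + 1) →
      A.QueriedBefore RO X k i t (simS n u v RO X j))
    (hread : ∀ k < R, ∀ i, #(A.blocksRead RO X k i) ≤ c)
    (hk : k < R) (ht : t < q) (hj : j ≤ L) (hq : mquery A RO X k i t = simS n u v RO X j) :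
    j < (k + 1) * c := by
  induction k using Nat.strong_induction_on generalizing i t j with
  | _ k ih =>
    by_contra! hle
    have hprev : ∀ k' < k, ∀ i', ∀ t < q, ∀ j ≤ L,
        mquery A RO X k' i' t = simS n u v RO X j → j < k * c :=
      fun k' hk' i' t ht j hj hq =>
        (ih k' hk' (hk'.trans hk) ht hj hq).trans_le (Nat.mul_le_mul_right c hk')
    have hwalk : ∀ l, k * c ≤ l → l ≤ k * c + c →
        ∃ t < q, mquery A RO X k i t = simS n u v RO X l := fun l hl hlc =>
      exists_mquery_eq_simS_of_le (hstep k hk i) hprev hj ht hq hl (by lia)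
    exact (hread k hk i).not_gt (lt_card_blocksRead hn hcv hwalk)

theorem exists_bad_event_of_mquery_eq_simS {R L t : ℕ} (hn : 2 * u ≤ n) (hcv : c < v)
    (hRL : R * c ≤ L) (hk : k < R) (ht : t < q) (hq : mquery A RO X k i t = simS n u v RO X L) :
    (∃ (k : Fin R) (i : Fin m), c < #(A.blocksRead RO X k i)) ∨
      (∃ (k : Fin R) (i : Fin m) (t : Fin q) (j : Fin L), A.LuckyGuess RO X k i t j) ∨
      ∃ j : Fin L, SimFresh RO X j ∧ ¬ SimFresh RO X (j + 1) := by
  by_contra! ⟨hread, hguess, hfresh⟩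
  have hstep : ∀ k < R, ∀ i, ∀ t < q, ∀ j < L, mquery A RO X k i t = simS n u v RO X (j + 1) →
      A.QueriedBefore RO X k i t (simS n u v RO X j) := by
    intro k hk i t ht j hj hq
    by_contra hnot
    have hj' : SimFresh RO X j := simFresh_of_forall_succ (fun l hl => hfresh ⟨l, hl⟩) hj.le
    exact hguess ⟨k, hk⟩ i ⟨t, ht⟩ ⟨j, hj⟩ ⟨⟨hj', hnot⟩, hq⟩
  have hlt : L < (k + 1) * c :=
    lt_of_mquery_eq_simS hn hcv hstep (fun k hk => hread ⟨k, hk⟩) hk ht le_rfl hq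
  exact (hlt.trans_le (Nat.mul_le_mul_right c hk)).not_ge hRL

theorem unifProb_luckyGuess_le (A : MPC n s q m (Fin v → Bits u)) (hn : 2 * u ≤ n) (k : ℕ)
    (i : Fin m) (t j : ℕ) :
    unifProb (fun ω : (Bits n → Bits n) × (Fin v → Bits u) => A.LuckyGuess ω.1 ω.2 k i t j) ≤
      ((2 : ℝ) ^ u)⁻¹ := by
  refine unifProb_prod_right_le fun X => ?_
  refine (unifProb_mono fun RO hRO => ⟨hRO.1, ?_⟩).trans
    (unifProb_simR_succ_eq_le (by lia) X j (z := fun RO => secondBlock u (mquery A RO X k i t))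
      (fun _ hG => hG.1) fun RO b hG => by rw [A.mquery_update hG.2])
  rw [hRO.2, secondBlock_simS hn]

theorem unifProb_lt_card_blocksRead_le (A : MPC n s q m (Fin v → Bits u)) (c k : ℕ)
    (i : Fin m) :
    unifProb (fun ω : (Bits n → Bits n) × (Fin v → Bits u) =>
      c < #(A.blocksRead ω.1 ω.2 k i)) ≤ 2 ^ s * (v * q / 2 ^ u : ℝ) ^ (c + 1) := by
  refine unifProb_prod_le fun RO => ?_
  let candidates (st : Bits s) : Finset (Bits u) :=
    (Finset.range q).image fun t => firstBlock u (advQ n RO (A.qf k i st) t)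
  have hcard (st : Bits s) : #(candidates st) ≤ q := by
    simpa using Finset.card_image_le (s := Finset.range q)
  refine (unifProb_mono fun X hX => ⟨mstate A RO X k i, ?_⟩).trans
    ((unifProb_exists_le_card_filter_mem_le candidates hcard (c + 1)).trans_eq (by simp))
  have hblocks : A.blocksRead RO X k i =
      ({b | X b ∈ candidates (mstate A RO X k i)} : Finset (Fin v)) := by
    ext b
    simp [candidates, mem_blocksRead, mquery]
  exact Nat.succ_le_of_lt (hblocks ▸ hX)

theorem unifProb_exists_mquery_eq_simS_le (A : MPC n s q m (Fin v → Bits u)) (hn : 2 * u ≤ n)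
    {R L : ℕ} (hcv : c < v) (hRL : R * c ≤ L) :
    unifProb (fun ω : (Bits n → Bits n) × (Fin v → Bits u) =>
      ∃ k < R, ∃ i : Fin m, ∃ t < q, mquery A ω.1 ω.2 k i t = simS n u v ω.1 ω.2 L) ≤
    R * (m * (2 ^ s * (v * q / 2 ^ u : ℝ) ^ (c + 1))) +
      (R * (m * (q * (L * ((2 : ℝ) ^ u)⁻¹))) + L * (L * ((2 : ℝ) ^ u)⁻¹)) := by
  have hread := unifProb_exists_le _ fun k : Fin R => unifProb_exists_le _ fun i : Fin m =>
    A.unifProb_lt_card_blocksRead_le c k i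
  have hguess := unifProb_exists_le _ fun k : Fin R => unifProb_exists_le _ fun i : Fin m =>
    unifProb_exists_le _ fun t : Fin q => unifProb_exists_le _ fun j : Fin L =>
    A.unifProb_luckyGuess_le hn k i t j
  have hfresh := unifProb_exists_le _ fun j : Fin L =>
    (unifProb_simFresh_and_not_simFresh_succ_le (v := v) hn j).trans
      (mul_le_mul_of_nonneg_right (by exact_mod_cast j.2) (by positivity) :
        _ ≤ (L : ℝ) * ((2 : ℝ) ^ u)⁻¹)
  simp only [Fintype.card_fin] at hread hguess hfresh
  refine (unifProb_mono ?_).trans <| (unifProb_or_le _ _).trans <| add_le_add hread <|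
    (unifProb_or_le _ _).trans <| add_le_add hguess hfresh
  rintro ω ⟨k, hk, i, t, ht, hq⟩
  exact exists_bad_event_of_mquery_eq_simS hn hcv hRL hk ht hq

end SimLine

end MPC

/-! ### Numerical estimates -/

theorem two_rpow_neg_sub_logb_sub_logb {x y : ℝ} (hx : 0 < x) (hy : 0 < y) (u : ℕ) :
    (2 : ℝ) ^ (-((u : ℝ) - Real.logb 2 x - Real.logb 2 y)) = y * x / 2 ^ u := by
  rw [neg_sub, Real.rpow_sub two_pos, Real.rpow_sub two_pos, Real.rpow_natCast,
    Real.rpow_logb two_pos (by norm_num) hx, Real.rpow_logb two_pos (by norm_num) hy,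
    div_div_eq_mul_div]

theorem two_pow_mul_two_rpow_neg_pow_ceil_le {d : ℝ} (hd : 0 < d) (s : ℕ) :
    (2 : ℝ) ^ s * ((2 : ℝ) ^ (-d)) ^ (⌈s / d⌉₊ + 1) ≤ (2 : ℝ) ^ (-d) := by
  have hs : (s : ℝ) ≤ d * ⌈s / d⌉₊ := by
    rw [← div_le_iff₀' hd]
    exact Nat.le_ceil _
  rw [← Real.rpow_mul_natCast two_pos.le, ← Real.rpow_natCast 2 s, ← Real.rpow_add two_pos]
  refine Real.rpow_le_rpow_of_exponent_le one_le_two ?_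
  push_cast
  linarith

theorem mul_ceil_lt_of_le_div_sub_one {x : ℝ} {R w : ℕ} (hx : 0 ≤ x)
    (hR : (R : ℝ) ≤ w / (x + 1) - 1) : R * ⌈x⌉₊ < w := by
  have hRx : (R + 1) * (x + 1) ≤ w := (le_div_iff₀ (by positivity)).1 (le_sub_iff_add_le.1 hR)
  have hceil : (R : ℝ) * ⌈x⌉₊ ≤ R * (x + 1) := by
    gcongr
    exact (Nat.ceil_lt_add_one hx).le
  exact_mod_cast (by linarith : (R : ℝ) * ⌈x⌉₊ < w)

/-- **Lemma A.1 (quantitative form).**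
There is an absolute constant `K` such that, in the SimLine setting with
`u > log₂ q + log₂ v`, `h := s/(u − log₂ q − log₂ v) + 1 ≤ v`, for every deterministic
MPC algorithm and every number of rounds `R` with `1 ≤ R ≤ w/h − 1`, the probability over
uniformly random `(RO, X)` that some machine queries the final SimLine string `s_w`
during the first `R` rounds (rounds `0, …, R−1`) is at most
`K·R·(m·2^(−(u − log₂q − log₂v)) + w·m·q·2^(−u) + w²·2^(−u))`.
(Here `simS … (w-1)` is the paper's `s_w`.) -/
theorem stmt13 : ∃ K : ℝ, 0 < K ∧
    ∀ (n u v w s q m : ℕ), 1 ≤ u → 2 * u ≤ n → 2 ≤ v → 2 ≤ w → 1 ≤ s → 1 ≤ q → 1 ≤ m →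
    Real.logb 2 q + Real.logb 2 v < (u : ℝ) →
    ∀ h : ℝ, h = (s : ℝ) / ((u : ℝ) - Real.logb 2 q - Real.logb 2 v) + 1 → h ≤ (v : ℝ) →
    ∀ (A : MPC n s q m (Fin v → Bits u)) (R : ℕ), 1 ≤ R → (R : ℝ) ≤ (w : ℝ) / h - 1 →
    unifProb (fun ω : (Bits n → Bits n) × (Fin v → Bits u) =>
      ∃ k ≤ R - 1, ∃ i : Fin m, ∃ t < q,
        mquery A ω.1 ω.2 k i t = simS n u v ω.1 ω.2 (w - 1)) ≤
    K * (R : ℝ) *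
      ((m : ℝ) * (2 : ℝ) ^ (-((u : ℝ) - Real.logb 2 q - Real.logb 2 v)) +
        (w : ℝ) * m * q * (2 : ℝ) ^ (-(u : ℝ)) +
        (w : ℝ) ^ 2 * (2 : ℝ) ^ (-(u : ℝ))) := by
  refine ⟨1, one_pos, ?_⟩
  rintro n u v w s q m - hn hv - - hq - hlog h rfl hhv A R hR1 hR
  have hd : 0 < (u : ℝ) - Real.logb 2 q - Real.logb 2 v := by linarith
  have hpow := two_rpow_neg_sub_logb_sub_logb (Nat.cast_pos.2 hq)
    (Nat.cast_pos.2 (two_pos.trans_le hv)) u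
  set d : ℝ := (u : ℝ) - Real.logb 2 q - Real.logb 2 v
  have hcv : ⌈s / d⌉₊ < v := by
    rw [← Nat.add_one_le_iff, ← Nat.ceil_add_one (by positivity)]
    exact Nat.ceil_le.2 hhv
  have hRw : R * ⌈s / d⌉₊ ≤ w - 1 :=
    Nat.le_sub_one_of_lt (mul_ceil_lt_of_le_div_sub_one (by positivity) hR)
  have hw : ((w - 1 : ℕ) : ℝ) ≤ w := Nat.cast_le.2 (w.sub_le 1)
  have hR1' : (1 : ℝ) ≤ R := by exact_mod_cast hR1
  simp only [Nat.le_sub_one_iff_lt hR1]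
  refine (A.unifProb_exists_mquery_eq_simS_le hn hcv hRw).trans ?_
  rw [← hpow, Real.rpow_neg two_pos.le u, Real.rpow_natCast]
  have hstates := two_pow_mul_two_rpow_neg_pow_ceil_le hd s
  calc _ ≤ R * (m * (2 : ℝ) ^ (-d)) + (R * (m * (q * (w * ((2 : ℝ) ^ u)⁻¹))) +
        1 * (w * (w * ((2 : ℝ) ^ u)⁻¹))) := by rw [one_mul]; gcongr
    _ ≤ R * (m * (2 : ℝ) ^ (-d)) + (R * (m * (q * (w * ((2 : ℝ) ^ u)⁻¹))) +
        R * (w * (w * ((2 : ℝ) ^ u)⁻¹))) := by gcongr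
    _ = _ := by ring
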